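/- For any fixed integer h ≥ 1 and any fixed constant C > 0, there is δ = δ(h,C) > 0 such that the following holds for all sufficiently large n: every n-vertex C-Ramsey graph G contains at least δn^h induced copies of every graph H on h vertices (i.e., at least δn^h ordered h-tuples of distinct vertices of G on which the induced subgraph is isomorphic to H via the given ordering). -/

import Mathlib

/-- An `n`-vertex graph is `C`-Ramsey if it has no clique and no independent set of size
`C·log₂ n`. -/
def IsCRamsey (C : ℝ) {n : ℕ} (G : SimpleGraph (Fin n)) : Prop :=
  ∀ s : Finset (Fin n), C * Real.logb 2 n ≤ s.card →
    ¬ G.IsClique (s : Set (Fin n)) ∧ ¬ Gᶜ.IsClique (s : Set (Fin n))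

/-!
Suppose that a large vertex set `W` spans few induced copies of `H`. Embedding `H` one vertex at a
time, keeping for each later vertex its set of candidates, has to get stuck, which produces large
sets `X, Y ⊆ W` such that, in `G` or in its complement, every vertex of `X` has few neighbours in
`Y`. Say this holds in `G`, and let `I` be a maximum independent set of `X`. On average a vertex of
`Y` has few neighbours in `I`, so that most of `Y` splits into few classes according to the trace
`N(y) ∩ I`. An independent set inside a class can be added to `I` after deleting the small trace, so
if `X` had almost the same independence number as `W`, then every class would have a tiny one; by
the unbalanced Erdős–Szekeres bound the classes, and hence `Y`, would be too small. Passing from `W`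
to `X` therefore costs a constant factor in size but lowers the sum of the clique and independence
numbers by a constant multiple of `log n`. In a Ramsey graph this sum is `O(log n)`, so that only
boundedly many such steps are possible.
-/

section RamseyGraphs

open Finset Filter Asymptotics

variable {V : Type*} {G : SimpleGraph V} {I J S U W X Y Z : Finset V} {ε lam : ℝ}

/-- The largest size of a clique of `G` inside `W`. The independence number of `W` is
`cliqueNumOn Gᶜ W`, so that statements about cliques also cover independent sets. -/
noncomputable def cliqueNumOn (G : SimpleGraph V) (W : Finset V) : ℕ :=
  (G.induce (W : Set V)).cliqueNum

lemma exists_isClique_card_eq_cliqueNumOn (G : SimpleGraph V) (W : Finset V) :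
    ∃ S ⊆ W, G.IsClique (S : Set V) ∧ #S = cliqueNumOn G W := by
  obtain ⟨S, hS⟩ := (G.induce (W : Set V)).exists_isNClique_cliqueNum
  rw [SimpleGraph.isNClique_induce_iff] at hS
  exact ⟨S.map (.subtype _), map_subtype_subset S, by simpa using hS.isClique, hS.card_eq⟩

lemma card_le_cliqueNumOn (hSW : S ⊆ W) (hS : G.IsClique (S : Set V)) :
    #S ≤ cliqueNumOn G W := by
  classical
  have hclique : (G.induce (W : Set V)).IsNClique #S (S.subtype (· ∈ (W : Set V))) := by
    rw [SimpleGraph.isNClique_induce_iff, SimpleGraph.isNClique_iff]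
    have hmap : (S.subtype (· ∈ (W : Set V))).map (.subtype _) = S :=
      subtype_map_of_mem fun x hx ↦ hSW hx
    exact ⟨by rwa [hmap], by rw [hmap]⟩
  exact hclique.card_eq ▸ SimpleGraph.IsClique.card_le_cliqueNum (tc := hclique.isClique)

lemma cliqueNumOn_mono (G : SimpleGraph V) (hXW : X ⊆ W) : cliqueNumOn G X ≤ cliqueNumOn G W := by
  obtain ⟨S, hSX, hS, hcard⟩ := exists_isClique_card_eq_cliqueNumOn G X
  exact hcard ▸ card_le_cliqueNumOn (hSX.trans hXW) hS

lemma card_add_cliqueNumOn_le (hI : G.IsClique (I : Set V)) (hIW : I ⊆ W) (hUW : U ⊆ W)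
    (hadj : ∀ x ∈ I, ∀ y ∈ U, G.Adj x y) : #I + cliqueNumOn G U ≤ cliqueNumOn G W := by
  classical
  obtain ⟨J, hJU, hJ, hcard⟩ := exists_isClique_card_eq_cliqueNumOn G U
  have hdisj : Disjoint I J :=
    disjoint_left.2 fun x hxI hxJ ↦ G.irrefl (hadj x hxI x (hJU hxJ))
  rw [← hcard, ← card_union_of_disjoint hdisj]
  refine card_le_cliqueNumOn (union_subset hIW (hJU.trans hUW)) ?_
  have : Std.Symm G.Adj := ⟨fun _ _ ↦ SimpleGraph.Adj.symm⟩
  rw [coe_union, SimpleGraph.isClique_iff, Set.pairwise_union_of_symm]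
  exact ⟨hI, hJ, fun x hx y hy _ ↦ hadj x hx y (hJU hy)⟩

open scoped Classical in
/-- The neighbours of `v` that lie in `Y`. -/
noncomputable def neighborsIn (G : SimpleGraph V) (v : V) (Y : Finset V) : Finset V :=
  {y ∈ Y | G.Adj v y}

lemma mem_neighborsIn {v y : V} : y ∈ neighborsIn G v Y ↔ y ∈ Y ∧ G.Adj v y := by
  simp only [neighborsIn, mem_filter]

lemma neighborsIn_subset (G : SimpleGraph V) (v : V) (Y : Finset V) : neighborsIn G v Y ⊆ Y :=
  fun _ hy ↦ (mem_neighborsIn.1 hy).1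

lemma sum_card_neighborsIn_comm (G : SimpleGraph V) (X Y : Finset V) :
    ∑ x ∈ X, #(neighborsIn G x Y) = ∑ y ∈ Y, #(neighborsIn G y X) := by
  classical
  have hdouble := sum_card_bipartiteAbove_eq_sum_card_bipartiteBelow (s := X) (t := Y) G.Adj
  simpa only [bipartiteAbove, bipartiteBelow, neighborsIn, G.adj_comm] using hdouble

lemma cliqueNumOn_neighborsIn_lt {v : V} (hv : v ∈ U) :
    cliqueNumOn G (neighborsIn G v U) < cliqueNumOn G U := by
  have hjoin := card_add_cliqueNumOn_le (G := G) (I := {v}) (W := U) (by simp)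
    (singleton_subset_iff.2 hv) (neighborsIn_subset G v U)
    (by simp only [mem_singleton, forall_eq, mem_neighborsIn]; tauto)
  rw [card_singleton] at hjoin
  lia

lemma card_neighborsIn_add_card_neighborsIn_compl (G : SimpleGraph V) {v : V} (hv : v ∈ U) :
    #(neighborsIn G v U) + #(neighborsIn Gᶜ v U) + 1 = #U := by
  classical
  have hnbr : neighborsIn G v U = {y ∈ U.erase v | G.Adj v y} := by
    ext y
    simp only [mem_neighborsIn, mem_filter, mem_erase]
    exact ⟨fun h ↦ ⟨⟨h.2.ne', h.1⟩, h.2⟩, fun h ↦ ⟨h.1.2, h.2⟩⟩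
  have hnbrCompl : neighborsIn Gᶜ v U = {y ∈ U.erase v | ¬ G.Adj v y} := by
    ext y
    simp only [mem_neighborsIn, mem_filter, mem_erase, SimpleGraph.compl_adj]
    tauto
  rw [hnbr, hnbrCompl, card_filter_add_card_filter_not, card_erase_add_one hv]

theorem card_lt_choose_of_cliqueNumOn_le (G : SimpleGraph V) (U : Finset V) :
    ∀ s t : ℕ, cliqueNumOn Gᶜ U ≤ s → cliqueNumOn G U ≤ t → #U < (s + t).choose s := by
  induction U using Finset.strongInduction with
  | H U ih =>
    intro s t hs ht
    obtain rfl | ⟨v, hv⟩ := U.eq_empty_or_nonempty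
    · exact Nat.choose_pos (Nat.le_add_right s t)
    have hssubset (K : SimpleGraph V) : neighborsIn K v U ⊂ U :=
      ⟨neighborsIn_subset K v U, fun h ↦ K.irrefl (mem_neighborsIn.1 (h hv)).2⟩
    have hcliques := cliqueNumOn_neighborsIn_lt (G := G) hv
    have hindeps := cliqueNumOn_neighborsIn_lt (G := Gᶜ) hv
    obtain ⟨s, rfl⟩ : ∃ s', s = s' + 1 := Nat.exists_eq_succ_of_ne_zero (by lia)
    obtain ⟨t, rfl⟩ : ∃ t', t = t' + 1 := Nat.exists_eq_succ_of_ne_zero (by lia)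
    have hnbr := ih _ (hssubset G) (s + 1) t
      ((cliqueNumOn_mono _ (neighborsIn_subset _ _ _)).trans hs) (by lia)
    have hnbrCompl := ih _ (hssubset Gᶜ) s (t + 1)
      (by lia) ((cliqueNumOn_mono _ (neighborsIn_subset _ _ _)).trans ht)
    have hpascal : (s + 1 + (t + 1)).choose (s + 1) =
        (s + (t + 1)).choose s + (s + 1 + t).choose (s + 1) := by
      rw [show s + 1 + (t + 1) = (s + (t + 1)) + 1 by ring, Nat.choose_succ_succ,
        show s + 1 + t = s + (t + 1) by ring]
    have hcard := card_neighborsIn_add_card_neighborsIn_compl G hv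
    lia

lemma card_powerset_filter_card_le_le_exp {ι : Type*} (I : Finset ι) (k : ℝ) (hlam : 0 ≤ lam) :
    (#{S ∈ I.powerset | (#S : ℝ) ≤ k} : ℝ) ≤ Real.exp (lam * k + Real.exp (-lam) * #I) := by
  have hbinomial : ∑ S ∈ I.powerset, Real.exp (-lam) ^ #S = (1 + Real.exp (-lam)) ^ #I := by
    simpa using (prod_one_add (f := fun _ ↦ Real.exp (-lam)) I).symm
  calc (#{S ∈ I.powerset | (#S : ℝ) ≤ k} : ℝ)
      = ∑ S ∈ I.powerset with (#S : ℝ) ≤ k, (1 : ℝ) := by simp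
    _ ≤ ∑ S ∈ I.powerset with (#S : ℝ) ≤ k, Real.exp (lam * k) * Real.exp (-lam) ^ #S := by
        refine sum_le_sum fun S hS ↦ ?_
        rw [← Real.exp_nat_mul, ← Real.exp_add]
        have := mul_le_mul_of_nonneg_left (mem_filter.1 hS).2 hlam
        exact Real.one_le_exp (by linarith)
    _ ≤ ∑ S ∈ I.powerset, Real.exp (lam * k) * Real.exp (-lam) ^ #S :=
        sum_le_sum_of_subset_of_nonneg (filter_subset _ _) fun _ _ _ ↦ by positivity
    _ = Real.exp (lam * k) * (1 + Real.exp (-lam)) ^ #I := by rw [← mul_sum, hbinomial]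
    _ ≤ Real.exp (lam * k) * Real.exp (Real.exp (-lam)) ^ #I := by
        gcongr
        linarith [Real.add_one_le_exp (Real.exp (-lam))]
    _ = Real.exp (lam * k + Real.exp (-lam) * #I) := by
        rw [← Real.exp_nat_mul, ← Real.exp_add, mul_comm (#I : ℝ)]

lemma choose_le_exp (n k : ℕ) (hlam : 0 ≤ lam) :
    (n.choose k : ℝ) ≤ Real.exp (lam * k + Real.exp (-lam) * n) := by
  have hsubset : powersetCard k (range n) ⊆ {S ∈ (range n).powerset | (#S : ℝ) ≤ k} := by
    intro S hS
    rw [mem_powersetCard] at hS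
    simp [hS]
  calc (n.choose k : ℝ) = #(powersetCard k (range n)) := by rw [card_powersetCard, card_range]
    _ ≤ #{S ∈ (range n).powerset | (#S : ℝ) ≤ k} := by gcongr
    _ ≤ _ := by simpa using card_powerset_filter_card_le_le_exp (range n) k hlam

lemma card_le_exp_cliqueNumOn (G : SimpleGraph V) (U : Finset V) (hlam : 0 ≤ lam) :
    (#U : ℝ) ≤ Real.exp (lam * cliqueNumOn Gᶜ U +
      Real.exp (-lam) * (cliqueNumOn Gᶜ U + cliqueNumOn G U)) := by
  have hchoose := (card_lt_choose_of_cliqueNumOn_le G U _ _ le_rfl le_rfl).le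
  exact (Nat.cast_le.2 hchoose).trans (mod_cast choose_le_exp _ _ hlam)

/-- Every vertex of `X` has at most `ε * #Y` neighbours in `Y`. The sets need not be disjoint, and
the condition is not symmetric in them. -/
def IsSparsePair (G : SimpleGraph V) (ε : ℝ) (X Y : Finset V) : Prop :=
  ∀ x ∈ X, (#(neighborsIn G x Y) : ℝ) ≤ ε * #Y

lemma IsSparsePair.card_le_two_mul_card_filter (hXY : IsSparsePair G ε X Y) (hε : 0 < ε) :
    #Y ≤ 2 * #{y ∈ Y | (#(neighborsIn G y X) : ℝ) ≤ 2 * ε * #X} := by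
  obtain rfl | hX := X.eq_empty_or_nonempty
  · simp [neighborsIn, two_mul]
  have hpos : 0 < ε * #X := by have := hX.card_pos; positivity
  have hmarkov : (#{y ∈ Y | ¬ (#(neighborsIn G y X) : ℝ) ≤ 2 * ε * #X} : ℝ) * (2 * (ε * #X)) ≤
      #Y * (ε * #X) :=
    calc (#{y ∈ Y | ¬ (#(neighborsIn G y X) : ℝ) ≤ 2 * ε * #X} : ℝ) * (2 * (ε * #X))
        ≤ ∑ y ∈ Y with ¬ (#(neighborsIn G y X) : ℝ) ≤ 2 * ε * #X, (#(neighborsIn G y X) : ℝ) := by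
          rw [← nsmul_eq_mul]
          refine card_nsmul_le_sum _ _ _ fun y hy ↦ ?_
          linarith [(mem_filter.1 hy).2]
      _ ≤ ∑ y ∈ Y, (#(neighborsIn G y X) : ℝ) :=
          sum_le_sum_of_subset_of_nonneg (filter_subset _ _) fun _ _ _ ↦ by positivity
      _ = ∑ x ∈ X, (#(neighborsIn G x Y) : ℝ) := mod_cast sum_card_neighborsIn_comm G Y X
      _ ≤ #X * (ε * #Y) := by simpa using sum_le_card_nsmul X _ _ hXY
      _ = #Y * (ε * #X) := by ring
  have hbad : #{y ∈ Y | ¬ (#(neighborsIn G y X) : ℝ) ≤ 2 * ε * #X} * 2 ≤ #Y := by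
    rw [← mul_assoc] at hmarkov
    exact_mod_cast le_of_mul_le_mul_right hmarkov hpos
  have hsplit := card_filter_add_card_filter_not (s := Y)
    (fun y ↦ (#(neighborsIn G y X) : ℝ) ≤ 2 * ε * #X)
  lia

lemma card_add_cliqueNumOn_compl_le (hI : Gᶜ.IsClique (I : Set V)) (hIW : I ⊆ W) (hUW : U ⊆ W)
    (hIU : Disjoint I U) (hS : ∀ y ∈ U, neighborsIn G y I = S) :
    #I + cliqueNumOn Gᶜ U ≤ cliqueNumOn Gᶜ W + #S := by
  classical
  have hnonadj : ∀ x ∈ I \ S, ∀ y ∈ U, Gᶜ.Adj x y := by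
    intro x hx y hy
    obtain ⟨hxI, hxS⟩ := mem_sdiff.1 hx
    refine (SimpleGraph.compl_adj G x y).2 ⟨?_, fun hadj ↦ hxS ?_⟩
    · exact fun hxy ↦ disjoint_left.1 hIU hxI (hxy ▸ hy)
    · exact hS y hy ▸ mem_neighborsIn.2 ⟨hxI, hadj.symm⟩
  have hjoin := card_add_cliqueNumOn_le (hI.subset (coe_subset.2 sdiff_subset))
    (sdiff_subset.trans hIW) hUW hnonadj
  have := le_card_sdiff S I
  lia

theorem card_le_exp_of_card_neighborsIn_le {k : ℝ} (hI : Gᶜ.IsClique (I : Set V)) (hIW : I ⊆ W)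
    (hZW : Z ⊆ W) (hIZ : Disjoint I Z) (hk : ∀ y ∈ Z, (#(neighborsIn G y I) : ℝ) ≤ k)
    (hlam : 0 ≤ lam) :
    (#Z : ℝ) ≤ Real.exp (lam * (cliqueNumOn Gᶜ W - #I + 2 * k) +
      Real.exp (-lam) * (#I + cliqueNumOn Gᶜ W + cliqueNumOn G W)) := by
  classical
  set traces : Finset (Finset V) := {S ∈ I.powerset | (#S : ℝ) ≤ k}
  have hmaps : ∀ y ∈ Z, neighborsIn G y I ∈ traces := fun y hy ↦
    mem_filter.2 ⟨mem_powerset.2 (neighborsIn_subset G y I), hk y hy⟩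
  have hfiber : ∀ S ∈ traces, (#{y ∈ Z | neighborsIn G y I = S} : ℝ) ≤
      Real.exp (lam * (cliqueNumOn Gᶜ W - #I + k) +
        Real.exp (-lam) * (cliqueNumOn Gᶜ W + cliqueNumOn G W)) := by
    intro S hS
    set U : Finset V := {y ∈ Z | neighborsIn G y I = S}
    have hUZ : U ⊆ Z := filter_subset _ _
    have hUW : U ⊆ W := hUZ.trans hZW
    have hindep : (#I + cliqueNumOn Gᶜ U : ℝ) ≤ cliqueNumOn Gᶜ W + #S := mod_cast
      card_add_cliqueNumOn_compl_le hI hIW hUW (hIZ.mono_right hUZ) fun y hy ↦ (mem_filter.1 hy).2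
    refine (card_le_exp_cliqueNumOn G U hlam).trans (Real.exp_le_exp.2 ?_)
    gcongr
    · linarith [(mem_filter.1 hS).2]
    · exact cliqueNumOn_mono Gᶜ hUW
    · exact cliqueNumOn_mono G hUW
  calc (#Z : ℝ) = ∑ S ∈ traces, (#{y ∈ Z | neighborsIn G y I = S} : ℝ) :=
        mod_cast card_eq_sum_card_fiberwise hmaps
    _ ≤ #traces * Real.exp (lam * (cliqueNumOn Gᶜ W - #I + k) +
          Real.exp (-lam) * (cliqueNumOn Gᶜ W + cliqueNumOn G W)) := by
        simpa using sum_le_card_nsmul traces _ _ hfiber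
    _ ≤ Real.exp (lam * k + Real.exp (-lam) * #I) *
          Real.exp (lam * (cliqueNumOn Gᶜ W - #I + k) +
            Real.exp (-lam) * (cliqueNumOn Gᶜ W + cliqueNumOn G W)) := by
        gcongr
        exact card_powerset_filter_card_le_le_exp I k hlam
    _ = _ := by rw [← Real.exp_add]; ring_nf

theorem IsSparsePair.card_le (hXY : IsSparsePair G ε X Y) (hX : X ⊆ W) (hY : Y ⊆ W) (hε : 0 < ε)
    (hlam : 0 ≤ lam) :
    (#Y : ℝ) ≤ 2 * (cliqueNumOn Gᶜ X +
      Real.exp (lam * (cliqueNumOn Gᶜ W - cliqueNumOn Gᶜ X + 4 * ε * cliqueNumOn Gᶜ X) +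
        Real.exp (-lam) * (cliqueNumOn Gᶜ X + cliqueNumOn Gᶜ W + cliqueNumOn G W))) := by
  classical
  obtain ⟨I, hIX, hI, hIcard⟩ := exists_isClique_card_eq_cliqueNumOn Gᶜ X
  have hIY : IsSparsePair G ε I Y := fun x hx ↦ hXY x (hIX hx)
  set Z : Finset V := {y ∈ Y | (#(neighborsIn G y I) : ℝ) ≤ 2 * ε * #I}
  have hhalf : #Y ≤ 2 * #Z := hIY.card_le_two_mul_card_filter hε
  have hsdiff : #Z ≤ #I + #(Z \ I) := by have := le_card_sdiff I Z; lia
  have hZI : Z \ I ⊆ Z := sdiff_subset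
  have hexp := card_le_exp_of_card_neighborsIn_le hI (hIX.trans hX)
    ((hZI.trans (filter_subset _ _)).trans hY) disjoint_sdiff
    (fun y hy ↦ (mem_filter.1 (hZI hy)).2) hlam
  have hcard : (#Y : ℝ) ≤ 2 * (#I + #(Z \ I)) := by exact_mod_cast by lia
  rw [hIcard] at hexp hcard
  refine hcard.trans ?_
  gcongr
  exact hexp.trans_eq (by ring_nf)

/-- `W` contains no sparse pair of sets of size at least `r`. -/
def NoSparsePair (G : SimpleGraph V) (ε r : ℝ) (W : Finset V) : Prop :=
  ∀ X ⊆ W, ∀ Y ⊆ W, r ≤ #X → r ≤ #Y → ¬ IsSparsePair G ε X Y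

lemma exists_subset_forall_lt_card_neighborsIn {ι : Type*} [Fintype ι] {K : ι → SimpleGraph V}
    {Y : ι → Finset V} {r : ℝ} (hK : ∀ j, NoSparsePair (K j) ε r W) (hX : X ⊆ W)
    (hY : ∀ j, Y j ⊆ W) (hYr : ∀ j, r ≤ #(Y j)) :
    ∃ Z ⊆ X, (#X : ℝ) ≤ #Z + Fintype.card ι * r ∧
      ∀ v ∈ Z, ∀ j, ε * #(Y j) < #(neighborsIn (K j) v (Y j)) := by
  classical
  set bad : ι → Finset V := fun j ↦ {x ∈ X | (#(neighborsIn (K j) x (Y j)) : ℝ) ≤ ε * #(Y j)}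
  have hbad (j : ι) : (#(bad j) : ℝ) ≤ r := by
    by_contra! hlarge
    exact hK j (bad j) ((filter_subset _ _).trans hX) (Y j) (hY j) hlarge.le (hYr j)
      fun x hx ↦ (mem_filter.1 hx).2
  refine ⟨X \ univ.biUnion bad, sdiff_subset, ?_, fun v hv j ↦ ?_⟩
  · have hunion : (#(univ.biUnion bad) : ℝ) ≤ Fintype.card ι * r :=
      calc (#(univ.biUnion bad) : ℝ) ≤ ∑ j, (#(bad j) : ℝ) := mod_cast card_biUnion_le
        _ ≤ Fintype.card ι * r := by simpa using sum_le_card_nsmul univ _ _ fun j _ ↦ hbad j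
    have hsdiff : (#X : ℝ) ≤ #(X \ univ.biUnion bad) + #(univ.biUnion bad) :=
      mod_cast Nat.sub_le_iff_le_add.1 (le_card_sdiff _ _)
    linarith
  · by_contra! hle
    obtain ⟨hvX, hvbad⟩ := mem_sdiff.1 hv
    exact hvbad (mem_biUnion.2 ⟨j, mem_univ j, mem_filter.2 ⟨hvX, hle⟩⟩)

/-- The induced labelled copies of `H` in `G` whose vertex `i` lies in `U i`. -/
abbrev InducedCopy {ι : Type*} (H : SimpleGraph ι) (G : SimpleGraph V) (U : ι → Finset V) :=
  {f : H ↪g G // ∀ i, f i ∈ U i}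

instance InducedCopy.finite {ι : Type*} [Finite ι] (H : SimpleGraph ι) (G : SimpleGraph V)
    (U : ι → Finset V) : Finite (InducedCopy H G U) :=
  .of_injective (fun f i ↦ (⟨f.1 i, f.2 i⟩ : U i)) fun _ _ hfg ↦
    Subtype.ext (RelEmbedding.ext fun i ↦ congrArg Subtype.val (congrFun hfg i))

lemma card_inducedCopy_mono {ι : Type*} [Finite ι] (H : SimpleGraph ι) (G : SimpleGraph V)
    {U U' : ι → Finset V} (hU : ∀ i, U i ⊆ U' i) :
    Nat.card (InducedCopy H G U) ≤ Nat.card (InducedCopy H G U') :=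
  Nat.card_le_card_of_injective _
    (Subtype.map_injective (fun _ hf i ↦ hU i (hf i)) Function.injective_id)

variable {h : ℕ}

open scoped Classical in
/-- The graph, `G` or its complement, in which the images of the vertices `0` and `j + 1` of `H`
have to be adjacent in an induced copy of `H` in `G`. -/
noncomputable def linkGraph (H : SimpleGraph (Fin (h + 1))) (G : SimpleGraph V) (j : Fin h) :
    SimpleGraph V :=
  if H.Adj 0 j.succ then G else Gᶜ

lemma linkGraph_adj {H : SimpleGraph (Fin (h + 1))} {j : Fin h} {v w : V} :
    (linkGraph H G j).Adj v w ↔ v ≠ w ∧ (G.Adj v w ↔ H.Adj 0 j.succ) := by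
  unfold linkGraph
  split_ifs with hadj
  · simpa [hadj] using SimpleGraph.Adj.ne
  · simp [hadj]

/-- The extension of an induced copy of `H` minus its vertex `0` by an image `v` of `0`. -/
def InducedCopy.cons {H : SimpleGraph (Fin (h + 1))} {U : Fin (h + 1) → Finset V} (v : U 0)
    (g : InducedCopy (H.comap Fin.succ) G fun j ↦ neighborsIn (linkGraph H G j) v (U j.succ)) :
    InducedCopy H G U :=
  have hlink (j : Fin h) : v.1 ≠ g.1 j ∧ (G.Adj v (g.1 j) ↔ H.Adj 0 j.succ) :=
    linkGraph_adj.1 (mem_neighborsIn.1 (g.2 j)).2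
  ⟨{  toFun := Fin.cons v g.1
      inj' := Fin.cons_injective_iff.2 ⟨fun ⟨j, hj⟩ ↦ (hlink j).1 hj.symm, g.1.injective⟩
      map_rel_iff' := by
        intro i j
        induction i using Fin.cases <;> induction j using Fin.cases
        · simp
        · exact (hlink _).2
        · exact (G.adj_comm _ _).trans ((hlink _).2.trans (H.adj_comm _ _))
        · exact g.1.map_adj_iff },
    Fin.cases v.2 fun j ↦ neighborsIn_subset _ _ _ (g.2 j)⟩

lemma InducedCopy.cons_injective {H : SimpleGraph (Fin (h + 1))} {U : Fin (h + 1) → Finset V}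
    (hZ : Z ⊆ U 0) :
    Function.Injective fun p : Σ v : Z,
      InducedCopy (H.comap Fin.succ) G fun j ↦ neighborsIn (linkGraph H G j) v (U j.succ) ↦
        InducedCopy.cons (H := H) (G := G) (U := U) ⟨p.1, hZ p.1.2⟩ p.2 := by
  rintro ⟨⟨v, hv⟩, g⟩ ⟨⟨w, hw⟩, g'⟩ heq
  have hcons : (Fin.cons v g.1 : Fin (h + 1) → V) = Fin.cons w g'.1 :=
    congrArg (fun f : InducedCopy H G U ↦ (f.1 : Fin (h + 1) → V)) heq
  obtain ⟨rfl, hg⟩ := Fin.cons_inj.1 hcons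
  obtain rfl : g = g' := Subtype.ext (DFunLike.coe_injective hg)
  rfl

theorem pow_le_card_inducedCopy {r : ℝ} (hε0 : 0 ≤ ε) (hε1 : ε ≤ 1) (hr : 0 ≤ r)
    (hG : NoSparsePair G ε r W) (hGc : NoSparsePair Gᶜ ε r W) (H : SimpleGraph (Fin h))
    (U : Fin h → Finset V) (hUW : ∀ i, U i ⊆ W) (hU : ∀ i, h * r ≤ ε ^ h * #(U i)) :
    r ^ h ≤ Nat.card (InducedCopy H G U) := by
  induction h with
  | zero =>
    have : Nonempty (InducedCopy H G U) := ⟨RelEmbedding.ofIsEmpty _ _, isEmptyElim⟩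
    simpa using Nat.one_le_iff_ne_zero.2 (Nat.card_pos (α := InducedCopy H G U)).ne'
  | succ h ih =>
    have hlarge (i) : (h + 1) * r ≤ #(U i) := by
      calc (h + 1) * r ≤ ε ^ (h + 1) * #(U i) := by exact_mod_cast hU i
        _ ≤ #(U i) := mul_le_of_le_one_left (by positivity) (pow_le_one₀ hε0 hε1)
    have hlink (j : Fin h) : NoSparsePair (linkGraph H G j) ε r W := by
      unfold linkGraph
      split_ifs <;> assumption
    have hhr : 0 ≤ h * r := by positivity
    obtain ⟨Z, hZ, hZcard, hZnbr⟩ := exists_subset_forall_lt_card_neighborsIn hlink (hUW 0)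
      (fun j ↦ hUW j.succ) fun j ↦ by linarith [hlarge j.succ]
    have hrZ : r ≤ #Z := by
      rw [Fintype.card_fin] at hZcard
      linarith [hlarge 0]
    have hextend (v : Z) : r ^ h ≤ (Nat.card (InducedCopy (H.comap Fin.succ) G
        fun j ↦ neighborsIn (linkGraph H G j) v (U j.succ)) : ℝ) := by
      refine ih _ _ (fun j ↦ (neighborsIn_subset _ _ _).trans (hUW _)) fun j ↦ ?_
      calc h * r ≤ ε ^ (h + 1) * #(U j.succ) := by
            have := hU j.succ
            push_cast at this
            linarith
        _ = ε ^ h * (ε * #(U j.succ)) := by ring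
        _ ≤ _ := by
            gcongr
            exact (hZnbr v v.2 j).le
    calc r ^ (h + 1) = r * r ^ h := pow_succ' r h
      _ ≤ #Z * r ^ h := by gcongr
      _ ≤ ∑ v : Z, (Nat.card (InducedCopy (H.comap Fin.succ) G
            fun j ↦ neighborsIn (linkGraph H G j) v (U j.succ)) : ℝ) := by
          simpa using card_nsmul_le_sum univ _ _ fun v _ ↦ hextend v
      _ ≤ Nat.card (InducedCopy H G U) := by
          rw [← Nat.cast_sum, ← Nat.card_sigma]
          exact mod_cast Nat.card_le_card_of_injective _ (InducedCopy.cons_injective hZ)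

lemma exists_isSparsePair_of_card_inducedCopy_lt {r : ℝ} (hε0 : 0 ≤ ε) (hε1 : ε ≤ 1)
    (hr : 0 ≤ r) (hrW : h * r ≤ ε ^ h * #W) (H : SimpleGraph (Fin h))
    (hfew : Nat.card (InducedCopy H G fun _ ↦ W) < r ^ h) :
    ∃ X ⊆ W, ∃ Y ⊆ W, r ≤ #X ∧ r ≤ #Y ∧ (IsSparsePair G ε X Y ∨ IsSparsePair Gᶜ ε X Y) := by
  by_contra! hnone
  refine hfew.not_ge (pow_le_card_inducedCopy hε0 hε1 hr ?_ ?_ H _ (fun _ ↦ subset_rfl) fun _ ↦ hrW)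
  · exact fun X hX Y hY hXr hYr ↦ (hnone X hX Y hY hXr hYr).1
  · exact fun X hX Y hY hXr hYr ↦ (hnone X hX Y hY hXr hYr).2

/-- The potential function of the density increment: clique number plus independence number. -/
noncomputable def cliqueIndepSum (G : SimpleGraph V) (W : Finset V) : ℕ :=
  cliqueNumOn G W + cliqueNumOn Gᶜ W

lemma cliqueIndepSum_compl (G : SimpleGraph V) (W : Finset V) :
    cliqueIndepSum Gᶜ W = cliqueIndepSum G W := by
  rw [cliqueIndepSum, cliqueIndepSum, compl_compl, add_comm]

theorem IsSparsePair.cliqueIndepSum_add_le {A l : ℝ} (hXY : IsSparsePair G ε X Y) (hX : X ⊆ W)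
    (hY : Y ⊆ W) (hε : 0 < ε) (hlam : 0 ≤ lam) (hl : 0 ≤ l) (hcliques : cliqueNumOn G W ≤ A * l)
    (hindeps : cliqueNumOn Gᶜ W ≤ A * l)
    (hparam : lam * (ε * (1 + 4 * A)) + 3 * Real.exp (-lam) * A ≤ 1 / 2)
    (hYcard : 2 * (A * l + Real.exp (l / 2)) < #Y) :
    cliqueIndepSum G X + ε * l ≤ cliqueIndepSum G W := by
  have hmono : (cliqueNumOn G X : ℝ) ≤ cliqueNumOn G W := mod_cast cliqueNumOn_mono G hX
  have hindepsX : (cliqueNumOn Gᶜ X : ℝ) ≤ A * l :=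
    (Nat.cast_le.2 (cliqueNumOn_mono Gᶜ hX)).trans hindeps
  suffices hdrop : (cliqueNumOn Gᶜ X : ℝ) + ε * l ≤ cliqueNumOn Gᶜ W by
    simp only [cliqueIndepSum, Nat.cast_add]
    linarith
  by_contra! hnodrop
  refine hYcard.not_ge ((hXY.card_le hX hY hε hlam).trans ?_)
  have hexponent : lam * (cliqueNumOn Gᶜ W - cliqueNumOn Gᶜ X + 4 * ε * cliqueNumOn Gᶜ X) +
      Real.exp (-lam) * (cliqueNumOn Gᶜ X + cliqueNumOn Gᶜ W + cliqueNumOn G W) ≤ l / 2 :=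
    calc _ ≤ lam * (ε * l + 4 * ε * (A * l)) + Real.exp (-lam) * (A * l + A * l + A * l) := by
          gcongr
          linarith
      _ = (lam * (ε * (1 + 4 * A)) + 3 * Real.exp (-lam) * A) * l := by ring
      _ ≤ 1 / 2 * l := by gcongr
      _ = l / 2 := by ring
  gcongr

theorem exists_subset_cliqueIndepSum_add_le {A l c : ℝ} (hε0 : 0 < ε) (hε1 : ε ≤ 1)
    (hlam : 0 ≤ lam) (hl : 0 ≤ l) (hcliques : cliqueNumOn G W ≤ A * l)
    (hindeps : cliqueNumOn Gᶜ W ≤ A * l)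
    (hparam : lam * (ε * (1 + 4 * A)) + 3 * Real.exp (-lam) * A ≤ 1 / 2)
    (hc0 : 0 ≤ c) (hc : h * c ≤ ε ^ h) (hcard : 2 * (A * l + Real.exp (l / 2)) < c * #W)
    (H : SimpleGraph (Fin h)) (hfew : Nat.card (InducedCopy H G fun _ ↦ W) < (c * #W) ^ h) :
    ∃ X ⊆ W, c * #W ≤ #X ∧ cliqueIndepSum G X + ε * l ≤ cliqueIndepSum G W := by
  have hcW : h * (c * #W) ≤ ε ^ h * #W := by rw [← mul_assoc]; gcongr
  obtain ⟨X, hX, Y, hY, hXcard, hYcard, hXY | hXY⟩ :=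
    exists_isSparsePair_of_card_inducedCopy_lt hε0.le hε1 (by positivity) hcW H hfew
  · exact ⟨X, hX, hXcard, hXY.cliqueIndepSum_add_le hX hY hε0 hlam hl hcliques hindeps hparam
      (hcard.trans_le hYcard)⟩
  · have hdrop := hXY.cliqueIndepSum_add_le hX hY hε0 hlam hl hindeps
      (by rwa [compl_compl]) hparam (hcard.trans_le hYcard)
    rw [cliqueIndepSum_compl, cliqueIndepSum_compl] at hdrop
    exact ⟨X, hX, hXcard, hdrop⟩

lemma exists_subset_add_mul_le_of_step {Φ : Finset V → ℝ} {c d : ℝ} (hc0 : 0 ≤ c) (hc1 : c ≤ 1)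
    (t : ℕ) (hstep : ∀ X ⊆ W, c ^ t * #W ≤ c * #X →
      ∃ Y ⊆ X, c * #X ≤ #Y ∧ Φ Y + d ≤ Φ X) :
    ∃ X ⊆ W, c ^ t * #W ≤ #X ∧ Φ X + t * d ≤ Φ W := by
  induction t with
  | zero => exact ⟨W, subset_rfl, by simp, by simp⟩
  | succ t ih =>
    have hpow : c ^ (t + 1) * #W ≤ c ^ t * #W :=
      mul_le_mul_of_nonneg_right (pow_le_pow_of_le_one hc0 hc1 t.le_succ) (by positivity)
    obtain ⟨X, hXW, hXcard, hXΦ⟩ := ih fun X hX hXcard ↦ hstep X hX (hpow.trans hXcard)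
    have hcX : c ^ (t + 1) * #W ≤ c * #X := by
      rw [pow_succ', mul_assoc]
      gcongr
    obtain ⟨Y, hYX, hYcard, hYΦ⟩ := hstep X hXW hcX
    refine ⟨Y, hYX.trans hXW, hcX.trans hYcard, ?_⟩
    push_cast
    linarith

lemma exists_increment_parameters {A : ℝ} (hA : 0 ≤ A) :
    ∃ lam ε : ℝ, 0 ≤ lam ∧ 0 < ε ∧ ε ≤ 1 ∧
      lam * (ε * (1 + 4 * A)) + 3 * Real.exp (-lam) * A ≤ 1 / 2 := by
  -- `12 * A` makes the second term at most `1 / 4`; then `ε` makes the first at most `1 / 4`.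
  refine ⟨12 * A, 1 / (12 * (1 + 4 * A) ^ 2), by positivity, by positivity, ?_, ?_⟩
  · rw [div_le_one (by positivity)]
    nlinarith
  · have hlinear : 12 * A * (1 / (12 * (1 + 4 * A) ^ 2) * (1 + 4 * A)) ≤ 1 / 4 := by
      field_simp
      linarith
    have hexp : Real.exp (-(12 * A)) * (12 * A) ≤ 1 := by
      rw [Real.exp_neg, inv_mul_le_one₀ (Real.exp_pos _)]
      linarith [Real.add_one_le_exp (12 * A)]
    linarith

theorem exists_pow_le_card_inducedCopy (h : ℕ) {A : ℝ} (hA : 0 ≤ A) :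
    ∃ δ : ℝ, 0 < δ ∧ ∀ {V : Type*} (G : SimpleGraph V) (W : Finset V) (l : ℝ), 0 < l →
      cliqueNumOn G W ≤ A * l → cliqueNumOn Gᶜ W ≤ A * l →
      2 * (A * l + Real.exp (l / 2)) < δ * #W → ∀ H : SimpleGraph (Fin h),
        (δ * #W) ^ h ≤ Nat.card (InducedCopy H G fun _ ↦ W) := by
  obtain ⟨lam, ε, hlam, hε0, hε1, hparam⟩ := exists_increment_parameters hA
  obtain ⟨t, ht⟩ := exists_nat_gt (2 * A / ε)
  rw [div_lt_iff₀ hε0] at ht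
  set c : ℝ := ε ^ h / (h + 1) with hc
  have hc0 : 0 < c := by positivity
  have hc1 : c ≤ 1 := div_le_one_of_le₀
    ((pow_le_one₀ hε0.le hε1).trans (by simp)) (by positivity)
  have hhc : h * c ≤ ε ^ h := by
    rw [hc, mul_div_left_comm]
    exact mul_le_of_le_one_right (by positivity) (div_le_one_of_le₀ (by simp) (by positivity))
  refine ⟨c ^ t, by positivity, fun G W l hl hcliques hindeps hcard H ↦ ?_⟩
  by_contra! hfew
  obtain ⟨X, -, -, hX⟩ := exists_subset_add_mul_le_of_step
    (Φ := fun X ↦ (cliqueIndepSum G X : ℝ)) (W := W) (d := ε * l) hc0.le hc1 t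
    fun X hXW hXcard ↦ exists_subset_cliqueIndepSum_add_le hε0 hε1 hlam hl.le
      ((Nat.cast_le.2 (cliqueNumOn_mono G hXW)).trans hcliques)
      ((Nat.cast_le.2 (cliqueNumOn_mono Gᶜ hXW)).trans hindeps) hparam hc0.le hhc
      (hcard.trans_le hXcard) H <| by
        refine (Nat.cast_le.2 (card_inducedCopy_mono H G fun _ ↦ hXW)).trans_lt ?_
        exact hfew.trans_le (by gcongr)
  have hsum : (cliqueIndepSum G W : ℝ) ≤ 2 * A * l := by
    simp only [cliqueIndepSum, Nat.cast_add]
    linarith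
  have hdrop : 2 * A * l < t * ε * l := by gcongr
  linarith

lemma eventually_mul_log_add_exp_half_log_lt (A : ℝ) {δ : ℝ} (hδ : 0 < δ) :
    ∀ᶠ x : ℝ in atTop, 2 * (A * Real.log x + Real.exp (Real.log x / 2)) < δ * x := by
  have hlog : (fun x : ℝ ↦ A * Real.log x) =o[atTop] fun x ↦ x :=
    Real.isLittleO_log_id_atTop.const_mul_left A
  have hsqrt : (fun x : ℝ ↦ Real.exp (Real.log x / 2)) =o[atTop] fun x ↦ x := by
    have hexp : (fun x : ℝ ↦ Real.exp (Real.log x / 2)) =o[atTop]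
        fun x ↦ Real.exp (Real.log x) := by
      rw [Real.isLittleO_exp_comp_exp_comp]
      simpa only [sub_half] using Real.tendsto_log_atTop.atTop_div_const two_pos
    exact hexp.congr' .rfl ((eventually_gt_atTop 0).mono fun x hx ↦ Real.exp_log hx)
  filter_upwards [((hlog.add hsqrt).bound (c := δ / 4) (by positivity)), eventually_gt_atTop 0]
    with x hx hxpos
  rw [Real.norm_eq_abs, Real.norm_of_nonneg hxpos.le] at hx
  linarith [le_of_abs_le hx, mul_pos hδ hxpos]

lemma IsCRamsey.cliqueNumOn_lt {C : ℝ} {n : ℕ} {G : SimpleGraph (Fin n)} (hG : IsCRamsey C G)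
    (W : Finset (Fin n)) : cliqueNumOn G W < C * Real.logb 2 n := by
  obtain ⟨S, -, hS, hcard⟩ := exists_isClique_card_eq_cliqueNumOn G W
  by_contra! hlarge
  exact (hG S (hcard ▸ hlarge)).1 hS

lemma IsCRamsey.compl {C : ℝ} {n : ℕ} {G : SimpleGraph (Fin n)} (hG : IsCRamsey C G) :
    IsCRamsey C Gᶜ :=
  fun s hs ↦ ⟨(hG s hs).2, by simpa only [compl_compl] using (hG s hs).1⟩

lemma card_inducedCopy_le_card_setOf {ι : Type*} [Finite ι] [Finite V] (H : SimpleGraph ι)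
    (G : SimpleGraph V) (U : ι → Finset V) :
    Nat.card (InducedCopy H G U) ≤ Nat.card {φ : ι → V | Function.Injective φ ∧
      ∀ i j, G.Adj (φ i) (φ j) ↔ H.Adj i j} :=
  Nat.card_le_card_of_injective
    (fun f ↦ ⟨f.1, f.1.injective, fun _ _ ↦ f.1.map_adj_iff⟩)
    fun _ _ hfg ↦ Subtype.ext (DFunLike.coe_injective (congrArg Subtype.val hfg))

end RamseyGraphs

theorem statement5 (h : ℕ) (hh : 1 ≤ h) (C : ℝ) (hC : 0 < C) :
    ∃ δ : ℝ, 0 < δ ∧ ∃ n₀ : ℕ, ∀ n : ℕ, n₀ ≤ n → ∀ G : SimpleGraph (Fin n),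
      IsCRamsey C G → ∀ H : SimpleGraph (Fin h),
        δ * (n : ℝ) ^ h ≤
          (Nat.card {φ : Fin h → Fin n | Function.Injective φ ∧
            ∀ i j, G.Adj (φ i) (φ j) ↔ H.Adj i j} : ℝ) := by
  obtain ⟨δ, hδ, hcopies⟩ := exists_pow_le_card_inducedCopy h (A := C / Real.log 2) (by positivity)
  have hlarge := (eventually_mul_log_add_exp_half_log_lt (C / Real.log 2) hδ).and
    (Filter.eventually_gt_atTop 1)
  obtain ⟨n₀, hn₀⟩ := Filter.eventually_atTop.1 (tendsto_natCast_atTop_atTop.eventually hlarge)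
  refine ⟨δ ^ h, by positivity, n₀, fun n hn G hG H ↦ ?_⟩
  obtain ⟨hcard, hn1⟩ := hn₀ n hn
  have hlogb : C * Real.logb 2 n = C / Real.log 2 * Real.log n := by rw [Real.logb]; ring
  calc δ ^ h * (n : ℝ) ^ h = (δ * (Finset.univ : Finset (Fin n)).card) ^ h := by
        rw [Finset.card_fin, mul_pow]
    _ ≤ Nat.card (InducedCopy H G fun _ ↦ Finset.univ) :=
        hcopies G Finset.univ (Real.log n) (Real.log_pos hn1)
          (hlogb ▸ (hG.cliqueNumOn_lt _).le) (hlogb ▸ (hG.compl.cliqueNumOn_lt _).le)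
          (by rwa [Finset.card_fin]) H
    _ ≤ _ := Nat.cast_le.2 (card_inducedCopy_le_card_setOf H G _)
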